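/- Let ℓ ≥ 1 be an integer and ω₁, ω₂ ∈ ℝ. Set a = exp(i ω₁), f = −1 + a⁻¹, and δ₀ = (1/2)·exp(−i ω₂)·(cos ω₁ − 1), and let δ̄₀ = (1/2)·exp(i ω₂)·(cos ω₁ − 1) denote its complex conjugate. Assume 1 + ℓ − ℓ·a⁻¹ + δ₀·z₁(a) ≠ 0. Then every β₀ ∈ ℂ^ℓ satisfying (B₀ + (f·e₁ + δ₀·D𝟙)·e₁ᵀ) β₀ = −(δ̄₀·D𝟙 + a^ℓ·e_ℓ) has first entry (β₀)₁ = (a^ℓ − δ̄₀·z₁(a)) / (1 + ℓ − ℓ·a⁻¹ + δ₀·z₁(a)). -/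

import Mathlib

open Matrix Complex

/-- The ℓ×ℓ complex tridiagonal matrix B₀ with (B₀)₁₁ = −1, other diagonal
entries −2, and super/sub-diagonal entries 1. -/
def B0C (ℓ : ℕ) : Matrix (Fin ℓ) (Fin ℓ) ℂ := fun i j =>
  if i = j then (if (i : ℕ) = 0 then -1 else -2)
  else if (i : ℕ) + 1 = (j : ℕ) ∨ (j : ℕ) + 1 = (i : ℕ) then 1 else 0

/-- The first standard basis vector e₁ of ℂ^ℓ. -/
def e1 (ℓ : ℕ) : Fin ℓ → ℂ := fun j => if (j : ℕ) = 0 then 1 else 0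

/-- The last standard basis vector e_ℓ of ℂ^ℓ. -/
def eL (ℓ : ℕ) : Fin ℓ → ℂ := fun j => if (j : ℕ) = ℓ - 1 then 1 else 0

/-- The vector D𝟙 ∈ ℂ^ℓ with entries (D𝟙)_j = a^{j-1}. -/
def D1 (ℓ : ℕ) (a : ℂ) : Fin ℓ → ℂ := fun j => a ^ (j : ℕ)

open Classical in
/-- The first entry z₁(a) of the solution z of B₀ z = D𝟙. -/
noncomputable def z1 (ℓ : ℕ) (a : ℂ) : ℂ :=
  if a = 1 then -((ℓ : ℂ) * (ℓ + 1)) / 2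
  else ((ℓ : ℂ) * (a - 1) + a * (1 - a ^ ℓ)) / (a - 1) ^ 2

/-!
The vector `w = (ℓ, ℓ - 1, …, 1)` satisfies `wᵀ B₀ = -e₁ᵀ`, so pairing the system
`(B₀ + u e₁ᵀ) β = v` with `w` leaves a scalar equation for the first entry,
`(w · u - 1) β₁ = w · v`. The remaining products are `w · e₁ = ℓ`, `w · e_ℓ = 1` and the
arithmetic-geometric sum `w · D𝟙 = -z₁(a)`.
-/

/-- The vector `(ℓ, ℓ - 1, …, 1)`, minus the first row of `B₀⁻¹`; pairing with it extracts the
first entry of the solution of a system with matrix `B₀`. -/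
def descendingWeight (ℓ : ℕ) : Fin ℓ → ℂ := fun j => ℓ - (j : ℕ)

theorem dotProduct_add_vecMulVec_mulVec {m n R : Type*} [Fintype m] [Fintype n] [CommSemiring R]
    (w : m → R) (A : Matrix m n R) (u : m → R) (p x : n → R) :
    w ⬝ᵥ (A + vecMulVec u p) *ᵥ x = (w ᵥ* A) ⬝ᵥ x + (w ⬝ᵥ u) * (p ⬝ᵥ x) := by
  rw [dotProduct_mulVec, vecMul_add, vecMul_vecMulVec, add_dotProduct, smul_dotProduct, smul_eq_mul]

theorem e1_eq_single {ℓ : ℕ} (hℓ : 0 < ℓ) : e1 ℓ = Pi.single ⟨0, hℓ⟩ 1 := by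
  ext j
  simp only [e1, Pi.single_apply, Fin.ext_iff]

theorem eL_eq_single {ℓ : ℕ} (hℓ : 0 < ℓ) : eL ℓ = Pi.single ⟨ℓ - 1, by lia⟩ 1 := by
  ext j
  simp only [eL, Pi.single_apply, Fin.ext_iff]

theorem transpose_B0C (ℓ : ℕ) : (B0C ℓ)ᵀ = B0C ℓ := by
  ext i j
  simp only [transpose_apply, B0C, Fin.ext_iff]
  grind

/-- Truncated subtraction is what makes the first row fit: there `i - 1 = i`, so `-2 + 1 = -1`. -/
theorem B0C_apply {ℓ : ℕ} (i j : Fin ℓ) :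
    B0C ℓ i j = (if (j : ℕ) = i + 1 then 1 else 0) - 2 * (if (j : ℕ) = i then 1 else 0) +
      (if (j : ℕ) = i - 1 then 1 else 0) := by
  simp only [B0C, Fin.ext_iff]
  grind

theorem B0C_mulVec_apply {ℓ : ℕ} (g : ℕ → ℂ) (hg : g ℓ = 0) (i : Fin ℓ) :
    (B0C ℓ *ᵥ fun j => g j) i = g (i + 1) - 2 * g i + g (i - 1) := by
  have sum_ite {k : ℕ} (hk : k < ℓ) : ∑ j : Fin ℓ, (if (j : ℕ) = k then g j else 0) = g k := by
    rw [Fin.sum_univ_eq_sum_range (fun j => if j = k then g j else 0), Finset.sum_ite_eq',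
      if_pos (Finset.mem_range.2 hk)]
  have sum_ite_succ : ∑ j : Fin ℓ, (if (j : ℕ) = i + 1 then g j else 0) = g (i + 1) := by
    rcases (Nat.succ_le_of_lt i.isLt).lt_or_eq with hi | hi
    · exact sum_ite hi
    · rw [← Nat.succ_eq_add_one, hi, hg]
      exact Finset.sum_eq_zero fun j _ => if_neg j.isLt.ne
  simp only [mulVec, dotProduct, B0C_apply, add_mul, sub_mul, mul_assoc, ite_mul, one_mul, zero_mul,
    Finset.sum_add_distrib, Finset.sum_sub_distrib, ← Finset.mul_sum]
  rw [sum_ite_succ, sum_ite i.isLt, sum_ite (by lia)]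

theorem descendingWeight_vecMul_B0C (ℓ : ℕ) : descendingWeight ℓ ᵥ* B0C ℓ = -e1 ℓ := by
  rw [← mulVec_transpose, transpose_B0C]
  ext ⟨i, hi⟩
  refine (B0C_mulVec_apply (fun k => (ℓ : ℂ) - k) (sub_self _) ⟨i, hi⟩).trans ?_
  cases i with
  | zero =>
    simp only [e1, Pi.neg_apply, if_true, Nat.zero_sub, Nat.cast_add, Nat.cast_zero, Nat.cast_one]
    ring
  | succ k =>
    simp only [e1, Pi.neg_apply, k.succ_ne_zero, if_false, Nat.add_sub_cancel, Nat.cast_add,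
      Nat.cast_one]
    ring

theorem z1_succ (ℓ : ℕ) (a : ℂ) : z1 (ℓ + 1) a = a * z1 ℓ a - (ℓ + 1) := by
  unfold z1
  split_ifs with h
  · subst h
    push_cast
    ring
  · have : a - 1 ≠ 0 := sub_ne_zero.2 h
    push_cast
    field_simp
    ring

theorem descendingWeight_dotProduct_D1 (ℓ : ℕ) (a : ℂ) :
    descendingWeight ℓ ⬝ᵥ D1 ℓ a = -z1 ℓ a := by
  induction ℓ with
  | zero => simp [z1]
  | succ n ih =>
    have weight_tail (i : Fin n) : descendingWeight (n + 1) i.succ = descendingWeight n i := by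
      simp [descendingWeight]
    have D1_tail (i : Fin n) : D1 (n + 1) a i.succ = a * D1 n a i := pow_succ' a i
    calc descendingWeight (n + 1) ⬝ᵥ D1 (n + 1) a
        = (n + 1) + a * (descendingWeight n ⬝ᵥ D1 n a) := by
          simp only [dotProduct, Fin.sum_univ_succ, weight_tail, D1_tail, Finset.mul_sum,
            mul_left_comm a]
          simp [descendingWeight, D1]
      _ = -z1 (n + 1) a := by rw [ih, z1_succ]; ring

theorem descendingWeight_dotProduct_e1 (ℓ : ℕ) : descendingWeight ℓ ⬝ᵥ e1 ℓ = ℓ := by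
  rcases ℓ.eq_zero_or_pos with rfl | hℓ
  · simp
  · simp [e1_eq_single hℓ, descendingWeight]

theorem descendingWeight_dotProduct_eL {ℓ : ℕ} (hℓ : 0 < ℓ) : descendingWeight ℓ ⬝ᵥ eL ℓ = 1 := by
  simp [eL_eq_single hℓ, descendingWeight, Nat.cast_pred hℓ]

theorem fe_ellx1_zeroth_order_general {ℓ : ℕ} (hℓ : 0 < ℓ) (a f δ δ' c : ℂ) (β : Fin ℓ → ℂ)
    (hβ : (B0C ℓ + vecMulVec (f • e1 ℓ + δ • D1 ℓ a) (e1 ℓ)) *ᵥ β = -(δ' • D1 ℓ a + c • eL ℓ)) :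
    β ⟨0, hℓ⟩ * (1 - ℓ * f + δ * z1 ℓ a) = c - δ' * z1 ℓ a := by
  have e1_dotProduct : e1 ℓ ⬝ᵥ β = β ⟨0, hℓ⟩ := by
    rw [e1_eq_single hℓ, single_one_dotProduct]
  have paired := congrArg (descendingWeight ℓ ⬝ᵥ ·) hβ
  simp only [dotProduct_add_vecMulVec_mulVec, descendingWeight_vecMul_B0C, neg_dotProduct,
    e1_dotProduct, dotProduct_neg, dotProduct_add, dotProduct_smul, smul_eq_mul,
    descendingWeight_dotProduct_e1, descendingWeight_dotProduct_D1,
    descendingWeight_dotProduct_eL hℓ] at paired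
  linear_combination -paired

theorem fe_ellx1_zeroth_order (ℓ : ℕ) (hℓ : 0 < ℓ) (ω₁ ω₂ : ℝ) (a f δ₀ δbar₀ : ℂ)
    (ha : a = Complex.exp (Complex.I * ω₁)) (hf : f = -1 + a⁻¹)
    (hδ₀ : δ₀ = (1 / 2 : ℂ) * Complex.exp (-(Complex.I * ω₂)) * (Real.cos ω₁ - 1))
    (hδbar₀ : δbar₀ = (1 / 2 : ℂ) * Complex.exp (Complex.I * ω₂) * (Real.cos ω₁ - 1))
    (hden : 1 + ℓ - ℓ * a⁻¹ + δ₀ * z1 ℓ a ≠ 0)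
    (β₀ : Fin ℓ → ℂ)
    (hβ₀ : (B0C ℓ + Matrix.vecMulVec (f • e1 ℓ + δ₀ • D1 ℓ a) (e1 ℓ)).mulVec β₀ =
      -(δbar₀ • D1 ℓ a + (a ^ ℓ) • eL ℓ)) :
    β₀ ⟨0, hℓ⟩ = (a ^ ℓ - δbar₀ * z1 ℓ a) / (1 + ℓ - ℓ * a⁻¹ + δ₀ * z1 ℓ a) := by
  rw [eq_div_iff hden, ← fe_ellx1_zeroth_order_general hℓ a f δ₀ δbar₀ (a ^ ℓ) β₀ hβ₀, hf]
  ring
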